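/- Let G be a Hausdorff weakly Lindelöf paratopological group with Hausdorff number Hs(G) ≤ ω. If G is ω-balanced, then for any continuous real-valued function f on G one can find a continuous d-open surjective homomorphism π : G → K onto a regular paratopological group K whose identity is the intersection of countably many open sets, and a continuous function h : K → ℝ such that f = h ∘ π. -/

import Mathlib

open Topology TopologicalSpace Pointwise Function Set

/-- A space is weakly Lindelöf if every open cover has a countable subfamily with dense union. -/
def WeaklyLindelof (X : Type*) [TopologicalSpace X] : Prop :=
  ∀ 𝒰 : Set (Set X), (∀ U ∈ 𝒰, IsOpen U) → ⋃₀ 𝒰 = Set.univ →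
    ∃ 𝒱 ⊆ 𝒰, 𝒱.Countable ∧ Dense (⋃₀ 𝒱)

/-- A (para)topological group is ω-balanced if every neighborhood of the identity admits a
countable subordinated family of open neighborhoods of the identity. -/
def OmegaBalanced (G : Type*) [Group G] [TopologicalSpace G] : Prop :=
  ∀ U ∈ 𝓝 (1 : G), ∃ V : ℕ → Set G,
    (∀ n, IsOpen (V n) ∧ (1 : G) ∈ V n) ∧
      ∀ g : G, ∃ n, (fun x => g * x * g⁻¹) '' V n ⊆ U

/-- Countable Hausdorff number: Hs(G) ≤ ω. -/
def HsCountable (G : Type*) [Group G] [TopologicalSpace G] : Prop :=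
  ∀ U ∈ 𝓝 (1 : G), ∃ V : ℕ → Set G,
    (∀ n, IsOpen (V n) ∧ (1 : G) ∈ V n) ∧ (⋂ n, V n * (V n)⁻¹) ⊆ U


theorem closure_family {X ι : Type*} [Countable ι] (op : ι → X → X → X) (S₀ : Set X)
    (h₀ : S₀.Countable) :
    ∃ S : Set X, S₀ ⊆ S ∧ S.Countable ∧ ∀ i, ∀ x ∈ S, ∀ y ∈ S, op i x y ∈ S := by
  let F : ℕ → Set X := fun n => Nat.rec S₀
    (fun _ T => T ∪ ⋃ i, Set.image2 (op i) T T) n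
  have hF : ∀ n, F (n + 1) = F n ∪ ⋃ i, Set.image2 (op i) (F n) (F n) := fun n => rfl
  have hmono : Monotone F := monotone_nat_of_le_succ (fun n => by
    rw [hF]; exact Set.subset_union_left)
  refine ⟨⋃ n, F n, Set.subset_iUnion F 0, Set.countable_iUnion ?_, ?_⟩
  · intro n
    induction n with
    | zero => exact h₀
    | succ n ih =>
      rw [hF]
      exact ih.union (Set.countable_iUnion fun i => ih.image2 ih _)
  · intro i x hx y hy
    obtain ⟨n, hn⟩ := Set.mem_iUnion.1 hx
    obtain ⟨m, hm⟩ := Set.mem_iUnion.1 hy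
    refine Set.mem_iUnion.2 ⟨max n m + 1, ?_⟩
    rw [hF]
    refine Or.inr (Set.mem_iUnion.2 ⟨i, ?_⟩)
    exact Set.mem_image2_of_mem (hmono (le_max_left n m) hn) (hmono (le_max_right n m) hm)

/-- A countable family of neighborhoods of the identity with good closure properties. -/
structure GoodFam {G : Type*} [Group G] [TopologicalSpace G] (V : ℕ → Set G) : Prop where
  op : ∀ n, IsOpen (V n)
  one : ∀ n, (1 : G) ∈ V n
  sq : ∀ n, ∃ m, ∀ x ∈ V m, ∀ y ∈ V m, x * y ∈ V n
  bal : ∀ n, ∀ g : G, ∃ m, ∀ x ∈ V m, g * x * g⁻¹ ∈ V n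
  hs : ∀ n, ∀ x : G, (∀ m, ∃ a ∈ V m, ∃ b ∈ V m, x * b = a) → x ∈ V n
  inter : ∀ n m, ∃ k, V k ⊆ V n ∩ V m

theorem exists_goodFam {G : Type*} [Group G] [TopologicalSpace G] [ContinuousMul G]
    (hHs : HsCountable G) (hB : OmegaBalanced G) (S₀ : Set (Set G)) (h₀ : S₀.Countable)
    (hS : ∀ U ∈ S₀, IsOpen U ∧ (1 : G) ∈ U) :
    ∃ V : ℕ → Set G, GoodFam V ∧ ∀ U ∈ S₀, ∃ n, V n = U := by
  let X := {U : Set G // IsOpen U ∧ (1 : G) ∈ U}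
  have hsq : ∀ U : X, ∃ W : X, ∀ x ∈ W.1, ∀ y ∈ W.1, x * y ∈ U.1 := by
    intro U
    obtain ⟨W, hW1, hW2, hW3⟩ := exists_open_nhds_one_mul_subset (U.2.1.mem_nhds U.2.2)
    exact ⟨⟨W, hW1, hW2⟩, fun x hx y hy => hW3 (Set.mul_mem_mul hx hy)⟩
  have hbal : ∀ U : X, ∃ W : ℕ → X, ∀ g : G, ∃ n, ∀ x ∈ (W n).1, g * x * g⁻¹ ∈ U.1 := by
    intro U
    obtain ⟨W, hW, hW2⟩ := hB U.1 (U.2.1.mem_nhds U.2.2)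
    refine ⟨fun n => ⟨W n, hW n⟩, fun g => ?_⟩
    obtain ⟨n, hn⟩ := hW2 g
    exact ⟨n, fun x hx => hn ⟨x, hx, rfl⟩⟩
  have hhs : ∀ U : X, ∃ W : ℕ → X, ∀ x : G,
      (∀ n, ∃ a ∈ (W n).1, ∃ b ∈ (W n).1, x * b = a) → x ∈ U.1 := by
    intro U
    obtain ⟨W, hW, hW2⟩ := hHs U.1 (U.2.1.mem_nhds U.2.2)
    refine ⟨fun n => ⟨W n, hW n⟩, fun x hx => hW2 (Set.mem_iInter.2 fun n => ?_)⟩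
    obtain ⟨a, ha, b, hb, hab⟩ := hx n
    exact Set.mem_mul.2 ⟨a, ha, b⁻¹, Set.inv_mem_inv.2 hb, by rw [← hab]; group⟩
  choose sq hsq using hsq
  choose bal hbal using hbal
  choose hs hhs using hhs
  let int : X → X → X := fun U W => ⟨U.1 ∩ W.1, U.2.1.inter W.2.1, U.2.2, W.2.2⟩
  let op : (Bool ⊕ (ℕ ⊕ ℕ)) → X → X → X := fun i U W => match i with
    | .inl true => int U W
    | .inl false => sq U
    | .inr (.inl n) => bal U n
    | .inr (.inr n) => hs U n
  let S1 : Set X := insert ⟨Set.univ, isOpen_univ, trivial⟩ (Subtype.val ⁻¹' S₀)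
  have hS1 : S1.Countable := (h₀.preimage Subtype.val_injective).insert _
  obtain ⟨S, hS1S, hSc, hcl⟩ := closure_family op S1 hS1
  have hne : S.Nonempty := ⟨_, hS1S (Set.mem_insert _ _)⟩
  obtain ⟨v, hv⟩ := hSc.exists_eq_range hne
  have hvS : ∀ n, v n ∈ S := fun n => hv ▸ Set.mem_range_self n
  have hSv : ∀ U ∈ S, ∃ n, v n = U := fun U hU => by rw [hv] at hU; exact hU
  refine ⟨fun n => (v n).1, ⟨fun n => (v n).2.1, fun n => (v n).2.2, ?_, ?_, ?_, ?_⟩, ?_⟩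
  · intro n
    obtain ⟨m, hm⟩ := hSv _ (hcl (.inl false) _ (hvS n) _ (hvS n))
    refine ⟨m, ?_⟩
    rw [hm]
    exact hsq (v n)
  · intro n g
    obtain ⟨k, hk⟩ := hbal (v n) g
    obtain ⟨m, hm⟩ := hSv _ (hcl (.inr (.inl k)) _ (hvS n) _ (hvS n))
    refine ⟨m, ?_⟩
    rw [hm]
    exact hk
  · intro n x hx
    refine hhs (v n) x fun k => ?_
    obtain ⟨m, hm⟩ := hSv _ (hcl (.inr (.inr k)) _ (hvS n) _ (hvS n))
    have := hx m
    rw [hm] at this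
    exact this
  · intro n m
    obtain ⟨k, hk⟩ := hSv _ (hcl (.inl true) _ (hvS n) _ (hvS m))
    refine ⟨k, ?_⟩
    rw [hk]
  · intro U hU
    obtain ⟨n, hn⟩ := hSv ⟨U, hS U hU⟩ (hS1S (Or.inr hU))
    exact ⟨n, by simp only [hn]⟩

namespace GoodFam

variable {G : Type*} [Group G] [TopologicalSpace G] {V : ℕ → Set G}

/-- The intersection of the family, as a subgroup. -/
def N (h : GoodFam V) : Subgroup G where
  carrier := ⋂ n, V n
  one_mem' := Set.mem_iInter.2 h.one
  mul_mem' := by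
    intro a b ha hb
    refine Set.mem_iInter.2 fun n => ?_
    obtain ⟨m, hm⟩ := h.sq n
    exact hm a (Set.mem_iInter.1 ha m) b (Set.mem_iInter.1 hb m)
  inv_mem' := by
    intro x hx
    refine Set.mem_iInter.2 fun n => h.hs n _ fun m => ?_
    exact ⟨1, h.one m, x, Set.mem_iInter.1 hx m, by group⟩

theorem mem_N (h : GoodFam V) {x : G} : x ∈ h.N ↔ ∀ n, x ∈ V n := Set.mem_iInter

theorem normal_N (h : GoodFam V) : h.N.Normal := by
  refine ⟨fun x hx g => h.mem_N.2 fun n => ?_⟩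
  obtain ⟨m, hm⟩ := h.bal n g
  exact hm x (h.mem_N.1 hx m)

theorem sep (h : GoodFam V) {x y : G} (hxy : x⁻¹ * y ∉ h.N) :
    ∃ n, ∀ a ∈ V n, ∀ b ∈ V n, (x * a)⁻¹ * (y * b) ∉ h.N := by
  have : ∃ m, ¬ ∃ a ∈ V m, ∃ b ∈ V m, x⁻¹ * y * b = a := by
    by_contra! hcon
    exact hxy (h.mem_N.2 fun n => h.hs n _ hcon)
  obtain ⟨m, hm⟩ := this
  obtain ⟨k, hk⟩ := h.sq m
  refine ⟨k, fun a ha b hb hN => hm ?_⟩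
  refine ⟨a * ((x * a)⁻¹ * (y * b)), hk _ ha _ (h.mem_N.1 hN k), b, ?_, by group⟩
  have := hk 1 (h.one k) b hb
  simpa using this

/-- Coding of cosets by functions on the naturals. -/
theorem exists_code [ContinuousMul G] (h : GoodFam V) (hWL : WeaklyLindelof G) :
    ∃ d : G → ℕ → ℕ → ℕ, ∀ x y, d x = d y → x⁻¹ * y ∈ h.N := by
  let W : ℕ → G → Set G := fun n a => {z | a⁻¹ * z ∈ V n ∧ z * a⁻¹ ∈ V n}
  have hWo : ∀ n a, IsOpen (W n a) := fun n a =>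
    ((h.op n).preimage (continuous_const_mul a⁻¹)).inter
      ((h.op n).preimage (continuous_mul_const a⁻¹))
  have hWm : ∀ n a, a ∈ W n a := fun n a => by
    simp [W, h.one n]
  have h1 : ∀ n, ∃ e : ℕ → G, Dense (⋃ i, W n (e i)) := by
    intro n
    obtain ⟨𝒱, h𝒱, hc, hd⟩ := hWL (Set.range (W n)) (by rintro _ ⟨a, rfl⟩; exact hWo n a)
      (Set.eq_univ_of_forall fun a => ⟨_, ⟨a, rfl⟩, hWm n a⟩)
    have hne : 𝒱.Nonempty := by
      by_contra hcon
      rw [Set.not_nonempty_iff_eq_empty] at hcon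
      subst hcon
      obtain ⟨z, hz⟩ := hd.nonempty
      simp at hz
    obtain ⟨v, hv⟩ := hc.exists_eq_range hne
    have : ∀ i, ∃ a, W n a = v i := fun i => h𝒱 (hv ▸ Set.mem_range_self i)
    choose e he using this
    refine ⟨e, ?_⟩
    rw [hv, Set.sUnion_range] at hd
    simpa only [he] using hd
  choose e he using h1
  have h2 : ∀ x n m, ∃ i, ∃ w ∈ V m, x * w ∈ W n (e n i) := by
    intro x n m
    obtain ⟨z, hz, hz'⟩ := (he n).inter_open_nonempty {z | x⁻¹ * z ∈ V m}
      ((h.op m).preimage (continuous_const_mul x⁻¹)) ⟨x, by simp [h.one m]⟩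
    obtain ⟨i, hi⟩ := Set.mem_iUnion.1 hz'
    exact ⟨i, x⁻¹ * z, hz, by simpa using hi⟩
  choose d hd using h2
  refine ⟨d, fun x y hxy => h.mem_N.2 fun n => h.hs n _ fun u => ?_⟩
  obtain ⟨u1, hu1⟩ := h.sq u
  obtain ⟨t, ht⟩ := h.bal u x⁻¹
  obtain ⟨t1, ht1⟩ := h.sq t
  obtain ⟨v, hv⟩ := h.inter u1 t1
  obtain ⟨s, hs⟩ := h.bal t1 x
  obtain ⟨w, hw⟩ := h.inter u1 s
  obtain ⟨p, hp, hp1, hp2⟩ := hd x v w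
  obtain ⟨q, hq, hq1, hq2⟩ := hd y v w
  rw [← hxy] at hq1 hq2
  set a := e v (d x v w)
  have k1 : q * (a⁻¹ * (x * p)) ∈ V u := hu1 _ (hw hq).1 _ (hv hp1).1
  have k2 : (y * q * a⁻¹) * (x * p * x⁻¹) ∈ V t := ht1 _ (hv hq2).2 _ (hs _ (hw hp).2)
  refine ⟨_, ht _ k2, _, k1, ?_⟩
  group

end GoodFam

theorem invariant_family {G : Type*} [Group G] [TopologicalSpace G] [ContinuousMul G]
    (hWL : WeaklyLindelof G) (f : G → ℝ) (hf : Continuous f) :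
    ∃ S : Set (Set G), S.Countable ∧ (∀ U ∈ S, IsOpen U ∧ (1 : G) ∈ U) ∧
      ∀ n : G, (∀ U ∈ S, n ∈ U) → ∀ x, f (x * n) = f x := by
  have h1 : ∀ (j : ℕ) (x : G), ∃ U : Set G, IsOpen U ∧ (1 : G) ∈ U ∧
      ∀ a ∈ U, ∀ b ∈ U, |f (x * (a * b)) - f x| < 1 / ((j : ℝ) + 1) := by
    intro j x
    have hc : Continuous fun z => |f (x * z) - f x| := by fun_prop
    have hmem : {z | |f (x * z) - f x| < 1 / ((j : ℝ) + 1)} ∈ 𝓝 (1 : G) := by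
      refine (isOpen_lt hc continuous_const).mem_nhds ?_
      simp only [Set.mem_setOf_eq, mul_one, sub_self, abs_zero]
      positivity
    obtain ⟨U, hU1, hU2, hU3⟩ := exists_open_nhds_one_mul_subset hmem
    exact ⟨U, hU1, hU2, fun a ha b hb => hU3 (Set.mul_mem_mul ha hb)⟩
  choose U hUo hU1 hU using h1
  have h2 : ∀ j, ∃ A : Set G, A.Countable ∧ Dense (⋃ a ∈ A, {z | a⁻¹ * z ∈ U j a}) := by
    intro j
    obtain ⟨𝒱, h𝒱, hc, hd⟩ := hWL (Set.range fun a => {z | a⁻¹ * z ∈ U j a})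
      (by rintro _ ⟨a, rfl⟩; exact (hUo j a).preimage (continuous_const_mul a⁻¹))
      (Set.eq_univ_of_forall fun a => ⟨_, ⟨a, rfl⟩, by simp [hU1]⟩)
    have hex : ∀ W : 𝒱, ∃ a, {z | a⁻¹ * z ∈ U j a} = W.1 := fun W => h𝒱 W.2
    choose c hc' using hex
    haveI := hc.to_subtype
    refine ⟨Set.range c, Set.countable_range c, hd.mono ?_⟩
    rintro z ⟨W, hW, hz⟩
    refine Set.mem_iUnion₂.2 ⟨c ⟨W, hW⟩, ⟨_, rfl⟩, ?_⟩
    rw [hc']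
    exact hz
  choose A hA hAd using h2
  refine ⟨⋃ j, U j '' A j, Set.countable_iUnion fun j => (hA j).image _, ?_, ?_⟩
  · intro W hW
    obtain ⟨j, a, -, rfl⟩ := Set.mem_iUnion.1 hW
    exact ⟨hUo j a, hU1 j a⟩
  · intro n hn x
    by_contra hne
    have hpos : 0 < |f (x * n) - f x| := abs_pos.2 (sub_ne_zero.2 hne)
    obtain ⟨j, hj⟩ := exists_nat_one_div_lt (show 0 < |f (x * n) - f x| / 4 by positivity)
    have hc1 : Continuous fun z => |f z - f x| := by fun_prop
    have hc2 : Continuous fun z => |f (z * n) - f (x * n)| := by fun_prop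
    have hjp : (0 : ℝ) < 1 / ((j : ℝ) + 1) := by positivity
    obtain ⟨z, ⟨hz1, hz2⟩, hz⟩ := (hAd j).inter_open_nonempty _
      ((isOpen_lt hc1 (continuous_const (y := 1 / ((j : ℝ) + 1)))).inter
        (isOpen_lt hc2 (continuous_const (y := 1 / ((j : ℝ) + 1)))))
      ⟨x, by simpa using hjp, by simpa using hjp⟩
    obtain ⟨a, ha, hza⟩ := Set.mem_iUnion₂.1 hz
    have e1 := hU j a _ hza 1 (hU1 j a)
    have e2 := hU j a _ hza n (hn _ (Set.mem_iUnion.2 ⟨j, a, ha, rfl⟩))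
    have r1 : a * (a⁻¹ * z * 1) = z := by group
    have r2 : a * (a⁻¹ * z * n) = z * n := by group
    rw [r1] at e1
    rw [r2] at e2
    simp only [Set.mem_setOf_eq] at hz1 hz2
    have : |f (x * n) - f x| < 4 * (1 / ((j : ℝ) + 1)) := by
      rw [abs_lt] at *
      constructor <;> linarith [hz1.1, hz1.2, hz2.1, hz2.2, e1.1, e1.2, e2.1, e2.2]
    linarith

/-- The semiregularization of a topology, transported along a map. -/
def srTop {K Q : Type*} [TopologicalSpace Q] (e : K → Q) : TopologicalSpace K where
  IsOpen s := ∀ x ∈ s, ∃ U : Set Q, IsOpen U ∧ e x ∈ U ∧ e ⁻¹' (interior (closure U)) ⊆ s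
  isOpen_univ := fun x _ => ⟨Set.univ, isOpen_univ, trivial, Set.subset_univ _⟩
  isOpen_inter := by
    intro s t hs ht x hx
    obtain ⟨U, hU, hxU, hUs⟩ := hs x hx.1
    obtain ⟨W, hW, hxW, hWt⟩ := ht x hx.2
    refine ⟨U ∩ W, hU.inter hW, ⟨hxU, hxW⟩, Set.subset_inter ?_ ?_⟩
    · exact (Set.preimage_mono (interior_mono (closure_mono Set.inter_subset_left))).trans hUs
    · exact (Set.preimage_mono (interior_mono (closure_mono Set.inter_subset_right))).trans hWt
  isOpen_sUnion := by
    intro S hS x hx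
    obtain ⟨s, hs, hxs⟩ := hx
    obtain ⟨U, hU, hxU, hUs⟩ := hS s hs x hxs
    exact ⟨U, hU, hxU, hUs.trans (Set.subset_sUnion_of_mem hs)⟩

section sr

variable {K Q : Type*} [Group K] [Group Q] [TopologicalSpace Q] (e : K ≃* Q)

theorem sr_isOpen_iff {s : Set K} : IsOpen[srTop e] s ↔
    ∀ x ∈ s, ∃ U : Set Q, IsOpen U ∧ e x ∈ U ∧ e ⁻¹' (interior (closure U)) ⊆ s := Iff.rfl

theorem sr_isOpen_reg {U : Set Q} : IsOpen[srTop e] (e ⁻¹' (interior (closure U))) := by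
  intro x hx
  refine ⟨interior (closure U), isOpen_interior, hx, Set.preimage_mono ?_⟩
  exact interior_mono (closure_minimal interior_subset isClosed_closure)

theorem sr_isClosed_reg {U : Set Q} (hU : IsOpen U) : IsClosed[srTop e] (e ⁻¹' (closure U)) := by
  letI := srTop e
  rw [← isOpen_compl_iff, sr_isOpen_iff]
  intro x hx
  refine ⟨(closure U)ᶜ, isClosed_closure.isOpen_compl, hx, ?_⟩
  intro y hy hyU
  have h1 : e y ∈ interior (closure (closure U)ᶜ) := hy
  have h2 : e y ∈ closure U := hyU
  obtain ⟨z, hz1, hz2⟩ := mem_closure_iff.1 h2 _ isOpen_interior h1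
  obtain ⟨w, hw1, hw2⟩ := mem_closure_iff.1 (interior_subset hz1) U hU hz2
  exact hw2 (subset_closure hw1)

theorem sr_continuousMul [ContinuousMul Q] : @ContinuousMul K (srTop e) _ := by
  letI := srTop e
  refine ⟨continuous_def.2 fun s hs => ?_⟩
  rw [isOpen_prod_iff]
  intro x y hxy
  obtain ⟨R, hR, hxR, hRs⟩ := hs _ hxy
  have hR' : IsOpen ((fun p : Q × Q => p.1 * p.2) ⁻¹' R) := hR.preimage continuous_mul
  obtain ⟨A, B, hA, hB, hxA, hyB, hAB⟩ := isOpen_prod_iff.1 hR' (e x) (e y)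
    (by simpa using hxR)
  refine ⟨_, _, sr_isOpen_reg e (U := A), sr_isOpen_reg e (U := B),
    interior_maximal subset_closure hA hxA, interior_maximal subset_closure hB hyB, ?_⟩
  rintro ⟨p, q⟩ ⟨hp, hq⟩
  apply hRs
  change e (p * q) ∈ interior (closure R)
  rw [map_mul]
  have hop : IsOpen (interior (closure A) * interior (closure B)) :=
    isOpen_interior.mul_left
  refine interior_maximal ?_ hop (Set.mul_mem_mul hp hq)
  rintro _ ⟨a, ha, b, hb, rfl⟩
  refine map_mem_closure₂ continuous_mul (interior_subset ha) (interior_subset hb) ?_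
  intro a ha b hb
  exact hAB (Set.mk_mem_prod ha hb)

theorem sr_t1 [T2Space Q] : @T1Space K (srTop e) := by
  letI := srTop e
  refine t1Space_iff_exists_open.2 ?_
  intro x y hxy
  obtain ⟨A, B, hA, hB, hxA, hyB, hAB⟩ := t2_separation (e.injective.ne hxy)
  refine ⟨_, sr_isOpen_reg e (U := A), interior_maximal subset_closure hA hxA, fun hy => ?_⟩
  obtain ⟨z, hz1, hz2⟩ := mem_closure_iff.1 (interior_subset hy) B hB hyB
  exact Set.disjoint_left.1 hAB hz2 hz1

theorem sr_regular [ContinuousMul Q] : @RegularSpace K (srTop e) := by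
  letI := srTop e
  refine RegularSpace.of_exists_mem_nhds_isClosed_subset ?_
  intro x s hs
  obtain ⟨t, hts, ht, hxt⟩ := mem_nhds_iff.1 hs
  obtain ⟨R, hR, hxR, hRt⟩ := ht x hxt
  have hmem : (fun z => e x * z) ⁻¹' R ∈ 𝓝 (1 : Q) :=
    (hR.preimage (continuous_const_mul (e x))).mem_nhds (by simpa using hxR)
  obtain ⟨V, hV, h1V, hVV⟩ := exists_open_nhds_one_mul_subset hmem
  have hxV : IsOpen ((fun z => (e x)⁻¹ * z) ⁻¹' V) := hV.preimage (continuous_const_mul _)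
  refine ⟨_, ?_, sr_isClosed_reg e hxV, ?_⟩
  · refine Filter.mem_of_superset ((sr_isOpen_reg e
      (U := (fun z => (e x)⁻¹ * z) ⁻¹' V)).mem_nhds ?_) (Set.preimage_mono interior_subset)
    exact interior_maximal subset_closure hxV (by simpa using h1V)
  · refine Set.Subset.trans ?_ (hRt.trans hts)
    refine Set.preimage_mono ?_
    intro y hy
    have hyV : IsOpen ((fun z => y⁻¹ * z) ⁻¹' V) := hV.preimage (continuous_const_mul _)
    refine interior_maximal ?_ hyV (show y⁻¹ * y ∈ V by simpa using h1V)
    intro w hw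
    have : y * (y⁻¹ * w) ∈ closure R := by
      refine map_mem_closure (f := fun a => a * (y⁻¹ * w)) (continuous_mul_const (y⁻¹ * w)) hy ?_
      intro a ha
      have : ((e x)⁻¹ * a) * (y⁻¹ * w) ∈ V * V := Set.mul_mem_mul ha hw
      have := hVV this
      simpa [mul_assoc] using this
    simpa using this

end sr

/-- For a Hausdorff weakly Lindelöf ω-balanced paratopological group with Hs(G) ≤ ω, every
continuous real-valued function factors through a continuous d-open surjective homomorphism
onto a regular paratopological group of countable pseudocharacter. -/
theorem statement4 (G : Type*) [Group G] [TopologicalSpace G] [ContinuousMul G] [T2Space G]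
    (hWL : WeaklyLindelof G) (hHs : HsCountable G) (hB : OmegaBalanced G) :
    ∀ f : G → ℝ, Continuous f →
      ∃ (K : Type) (gK : Group K) (tK : TopologicalSpace K),
        letI := gK
        letI := tK
        ContinuousMul K ∧ T1Space K ∧ RegularSpace K ∧
          (∃ W : ℕ → Set K, (∀ n, IsOpen (W n)) ∧ ({(1 : K)} : Set K) = ⋂ n, W n) ∧
          ∃ π : G →* K, Continuous π ∧ Surjective π ∧
            (∀ O : Set G, IsOpen O → ⇑π '' O ⊆ interior (closure (⇑π '' O))) ∧
            ∃ h : K → ℝ, Continuous h ∧ f = h ∘ π := by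
  intro f hf
  obtain ⟨S₀, hS₀, hS₀o, hinv⟩ := invariant_family hWL f hf
  obtain ⟨V, h, hV⟩ := exists_goodFam hHs hB S₀ hS₀ hS₀o
  have hinvN : ∀ n ∈ h.N, ∀ x, f (x * n) = f x := fun n hn x => hinv n (fun U hU => by
    obtain ⟨k, rfl⟩ := hV U hU
    exact h.mem_N.1 hn k) x
  haveI := h.normal_N
  obtain ⟨d, hd⟩ := h.exists_code hWL
  have hsmall : Small.{0} (G ⧸ h.N) := by
    refine small_of_injective (f := fun q : G ⧸ h.N => d q.out) ?_
    intro p q hpq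
    have := hd _ _ hpq
    rw [← QuotientGroup.eq] at this
    simpa using this
  have hopen : IsOpenMap ((↑) : G → G ⧸ h.N) := QuotientGroup.isOpenMap_coe
  have hcoe : Continuous ((↑) : G → G ⧸ h.N) := continuous_quotient_mk'
  have hsep : ∀ x y : G, ((x : G) : G ⧸ h.N) ≠ y → ∃ n, Disjoint
      (((↑) : G → G ⧸ h.N) '' ((fun z => x⁻¹ * z) ⁻¹' V n))
      (((↑) : G → G ⧸ h.N) '' ((fun z => y⁻¹ * z) ⁻¹' V n)) := by
    intro x y hxy
    obtain ⟨n, hn⟩ := h.sep (x := x) (y := y) (fun hc => hxy (QuotientGroup.eq.2 hc))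
    refine ⟨n, Set.disjoint_left.2 ?_⟩
    rintro _ ⟨a, ha, rfl⟩ ⟨b, hb, hab⟩
    refine hn _ ha _ hb ?_
    have := QuotientGroup.eq.1 hab.symm
    simpa using this
  have hVo : ∀ (x : G) n, IsOpen (((↑) : G → G ⧸ h.N) '' ((fun z => x⁻¹ * z) ⁻¹' V n)) :=
    fun x n => hopen _ ((h.op n).preimage (continuous_const_mul _))
  have hVm : ∀ (x : G) n, (x : G ⧸ h.N) ∈ ((↑) : G → G ⧸ h.N) '' ((fun z => x⁻¹ * z) ⁻¹' V n) :=
    fun x n => ⟨x, by simpa using h.one n, rfl⟩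
  haveI hT2 : T2Space (G ⧸ h.N) := by
    refine ⟨fun p q => ?_⟩
    induction p using QuotientGroup.induction_on with | _ x =>
    induction q using QuotientGroup.induction_on with | _ y =>
    intro hxy
    obtain ⟨n, hn⟩ := hsep x y hxy
    exact ⟨_, _, hVo x n, hVo y n, hVm x n, hVm y n, hn⟩
  haveI hCM : ContinuousMul (G ⧸ h.N) := by
    refine ⟨continuous_def.2 fun s hs => isOpen_prod_iff.2 fun p q => ?_⟩
    induction p using QuotientGroup.induction_on with | _ x =>
    induction q using QuotientGroup.induction_on with | _ y =>
    intro hxy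
    have h1 : IsOpen ((fun p : G × G => ((p.1 * p.2 : G) : G ⧸ h.N)) ⁻¹' s) :=
      hs.preimage (hcoe.comp continuous_mul)
    obtain ⟨A, B, hA, hB', hxA, hyB, hAB⟩ := isOpen_prod_iff.1 h1 x y hxy
    refine ⟨_, _, hopen A hA, hopen B hB', ⟨x, hxA, rfl⟩, ⟨y, hyB, rfl⟩, ?_⟩
    rintro ⟨_, _⟩ ⟨⟨a, ha, rfl⟩, ⟨b, hb, rfl⟩⟩
    exact hAB (Set.mk_mem_prod ha hb)
  let gK : Group (Shrink.{0} (G ⧸ h.N)) := (equivShrink (G ⧸ h.N)).symm.group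
  let e : Shrink.{0} (G ⧸ h.N) ≃* (G ⧸ h.N) := (equivShrink (G ⧸ h.N)).symm.mulEquiv
  refine ⟨Shrink.{0} (G ⧸ h.N), gK, srTop e, ?_⟩
  letI := srTop e
  refine ⟨sr_continuousMul e, sr_t1 e, sr_regular e, ?_, ?_⟩
  · refine ⟨fun n => e ⁻¹' (interior (closure (((↑) : G → G ⧸ h.N) ''
      ((fun z => (1 : G)⁻¹ * z) ⁻¹' V n)))), fun n => sr_isOpen_reg e, ?_⟩
    refine Set.Subset.antisymm ?_ ?_
    · rintro _ rfl
      refine Set.mem_iInter.2 fun n => ?_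
      refine interior_maximal subset_closure (hVo 1 n) ?_
      rw [map_one]
      exact hVm 1 n
    · intro k hk
      by_contra hne
      have hne' : e k ≠ 1 := fun hc => hne (e.map_eq_one_iff.1 hc)
      obtain ⟨x, hx⟩ := QuotientGroup.mk_surjective (e k)
      rw [← hx] at hne'
      obtain ⟨n, hn⟩ := hsep x 1 hne'
      have h1 := interior_subset (Set.mem_iInter.1 hk n)
      obtain ⟨z, hz1, hz2⟩ := mem_closure_iff.1 h1 _ (hVo x n) (hx ▸ hVm x n)
      exact Set.disjoint_left.1 hn hz1 hz2
  · let π : G →* Shrink.{0} (G ⧸ h.N) := e.symm.toMonoidHom.comp (QuotientGroup.mk' h.N)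
    have heπ : ∀ x, e (π x) = (x : G ⧸ h.N) := fun x => e.apply_symm_apply _
    have hπ : Continuous π := by
      refine continuous_def.2 fun s hs => isOpen_iff_mem_nhds.2 fun x hx => ?_
      obtain ⟨U, hU, hxU, hUs⟩ := hs _ hx
      refine Filter.mem_of_superset ((hU.preimage hcoe).mem_nhds (by have h2 := hxU; rw [heπ] at h2; exact h2)) ?_
      intro y hy
      refine hUs (interior_maximal subset_closure hU ?_)
      rw [heπ]
      exact hy
    have hsurj : Surjective π := by
      intro k
      obtain ⟨x, hx⟩ := QuotientGroup.mk_surjective (e k)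
      exact ⟨x, e.injective (by rw [heπ, hx])⟩
    refine ⟨π, hπ, hsurj, ?_, ?_⟩
    · intro O hO
      have hP := hopen O hO
      have hsub : e ⁻¹' (interior (closure (((↑) : G → G ⧸ h.N) '' O))) ⊆
          closure (π '' O) := by
        intro k hk
        refine mem_closure_iff.2 fun s hs hks => ?_
        obtain ⟨U, hU, hkU, hUs⟩ := hs k hks
        obtain ⟨z, hz1, ⟨y, hy, rfl⟩⟩ := mem_closure_iff.1 (interior_subset hk) U hU hkU
        refine ⟨π y, hUs (interior_maximal subset_closure hU ?_), ⟨y, hy, rfl⟩⟩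
        rw [heπ]
        exact hz1
      rintro _ ⟨x, hx, rfl⟩
      refine interior_maximal hsub (sr_isOpen_reg e) ?_
      refine interior_maximal subset_closure hP ?_
      rw [heπ]
      exact ⟨x, hx, rfl⟩
    · let g : G ⧸ h.N → ℝ := Quotient.lift f (by
        intro a b hab
        have hab' : a⁻¹ * b ∈ h.N := QuotientGroup.leftRel_apply.1 hab
        have := hinvN _ hab' a
        rw [← this]
        congr 1
        group)
      have hg : Continuous g := hf.quotient_lift _
      refine ⟨fun k => g (e k), ?_, ?_⟩
      · refine continuous_iff_continuousAt.2 fun k => ?_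
        refine (closed_nhds_basis (g (e k))).tendsto_right_iff.2 ?_
        rintro C ⟨hC, hCc⟩
        have hU : IsOpen (g ⁻¹' interior C) := isOpen_interior.preimage hg
        refine Filter.mem_of_superset ((sr_isOpen_reg e (U := g ⁻¹' interior C)).mem_nhds
          (interior_maximal subset_closure hU (mem_interior_iff_mem_nhds.2 hC))) ?_
        intro y hy
        have h1 : closure (g ⁻¹' interior C) ⊆ g ⁻¹' C :=
          closure_minimal (Set.preimage_mono interior_subset) (hCc.preimage hg)
        exact h1 (interior_subset hy)
      · funext x
        change f x = g (e (π x))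
        rw [heπ]
        rfl
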